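/- arXiv:1709.06056 — 5 statements merged into one kernel-verified Lean document; each statement's English description precedes it below -/
import Mathlib

section
/- There is no infinite sequence of Ctrie state descriptors s(0), s(1), s(2), … such that for every i the descriptor s(i) transitions to s(i+1) in one step; equivalently, the converse of the one-step transition relation on state descriptors is well-founded, so any sequence of non-consistency-changing successful CAS instructions in the Ctrie algorithm consists of finitely many state changes. -/
/-- A Ctrie state descriptor: (n, t, l, r, d) where `n` counts reachable
null-inodes, `t` reachable tomb-inodes, `l` live inodes, `r` single tips,
and `d` the total path length. -/
abbrev CtrieState := ℕ × ℕ × ℕ × ℕ × ℕ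

/-- One-step transition relation on Ctrie state descriptors, abstracting the
successful CAS instructions of the Ctrie algorithm that do not cause a
consistency change. -/
def CtrieStep : CtrieState → CtrieState → Prop :=
  fun (n, t, l, r, d) (n', t', l', r', d') =>
    l' = l ∧ (
      -- (i)
      (r > 0 ∧ d ≥ 1 ∧ ∃ j ≤ 1, n' = n + j ∧ t' = t ∧ r' = r - 1 ∧ d' = d - 1) ∨
      -- (ii)
      (∃ k ≤ n, ∃ j ≤ t, k + j > 0 ∧ n' = n - k ∧ t' = t - j ∧ r' = r ∧ d' ≤ d) ∨
      -- (iii)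
      (r > 0 ∧ ∃ j ≤ 1, d ≥ j ∧ n' = n + j ∧ t' = t ∧ r' = r - 1 ∧ d' = d - j) ∨
      -- (iv)
      (∃ k, 0 < k ∧ k ≤ n ∧ n' = n - k ∧ t' = t ∧ r' = r ∧ d' ≤ d) ∨
      -- (v)
      (n > 0 ∧ d ≥ 1 ∧ ∃ j : ℕ, n' = n - 1 ∧ t' = t ∧ r' = r + j ∧ d' = d - 1) ∨
      -- (vi)
      (t > 0 ∧ d ≥ 1 ∧ ∃ j : ℕ, n' = n ∧ t' = t - 1 ∧ r' = r + j ∧ d' = d - 1) ∨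
      -- (vii)
      ((n, t, l, r, d) = ((1 : ℕ), (0 : ℕ), (0 : ℕ), (0 : ℕ), (1 : ℕ)) ∧
        (n', t', l', r', d') = ((0 : ℕ), (0 : ℕ), (0 : ℕ), (0 : ℕ), (0 : ℕ))))

/-!
Order states lexicographically by total path length, then by the number of null-inodes, tomb-inodes
and single tips together. No transition increases the path length. Removing a null-inode or a
tomb-inode may create arbitrarily many single tips, but only in transitions that shorten the path
length; a transition that keeps the path length removes some of the counted nodes and creates none.
-/

namespace CtrieState

/-- The total path length `d` of a state `(n, t, l, r, d)`, the leading component of the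
termination measure. -/
def pathLength : CtrieState → ℕ
  | (_, _, _, _, d) => d

/-- The number `n + t + r` of null-inodes, tomb-inodes and single tips of a state
`(n, t, l, r, d)`, the tie-breaking component of the termination measure. -/
def compressibleCount : CtrieState → ℕ
  | (n, t, _, r, _) => n + t + r

/-- The termination measure of a state: the path length followed by the compressible count, ordered
lexicographically. -/
def rank (s : CtrieState) : ℕ ×ₗ ℕ :=
  toLex (s.pathLength, s.compressibleCount)

end CtrieState

namespace CtrieStep

variable {s s' : CtrieState}

theorem pathLength_le (h : CtrieStep s s') : s'.pathLength ≤ s.pathLength := by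
  obtain ⟨n, t, l, r, d⟩ := s
  obtain ⟨n', t', l', r', d'⟩ := s'
  simp only [CtrieStep, Prod.mk.injEq] at h
  change d' ≤ d
  grind

theorem compressibleCount_lt_of_pathLength_eq (h : CtrieStep s s')
    (hd : s'.pathLength = s.pathLength) : s'.compressibleCount < s.compressibleCount := by
  obtain ⟨n, t, l, r, d⟩ := s
  obtain ⟨n', t', l', r', d'⟩ := s'
  simp only [CtrieStep, Prod.mk.injEq] at h
  change d' = d at hd
  change n' + t' + r' < n + t + r
  obtain ⟨-, ⟨_, _, j, h⟩ | ⟨k, _, j, h⟩ | ⟨_, j, h⟩ | ⟨k, h⟩ | ⟨_, _, j, h⟩ |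
    ⟨_, _, j, h⟩ | h⟩ := h
  · exact absurd hd (by omega)
  · omega
  · have hj : j = 0 := by omega
    omega
  · omega
  · exact absurd hd (by omega)
  · exact absurd hd (by omega)
  · exact absurd hd (by omega)

theorem rank_lt (h : CtrieStep s s') : s'.rank < s.rank :=
  Prod.Lex.toLex_lt_toLex'.2 ⟨h.pathLength_le, h.compressibleCount_lt_of_pathLength_eq⟩

theorem wellFounded_flip : WellFounded (flip CtrieStep) :=
  Subrelation.wf rank_lt (InvImage.wf CtrieState.rank wellFounded_lt)

end CtrieStep

/-- There is no infinite sequence of one-step Ctrie state-descriptor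
transitions; equivalently, the converse of the one-step transition relation
is well-founded, so any sequence of non-consistency-changing successful CAS
instructions consists of finitely many state changes. -/
theorem ctrieStep_no_infinite_sequence :
    (¬ ∃ s : ℕ → CtrieState, ∀ i : ℕ, CtrieStep (s i) (s (i + 1))) ∧
    WellFounded (fun s' s : CtrieState => CtrieStep s s') := by
  refine ⟨?_, CtrieStep.wellFounded_flip⟩
  rintro ⟨s, hs⟩
  have rank_strictAnti : StrictAnti fun i => (s i).rank :=
    strictAnti_nat_of_succ_lt fun i => (hs i).rank_lt
  exact not_strictAnti_of_wellFoundedLT _ rank_strictAnti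
end

section
/- For every bitmap bmp : ℕ and bit indices i < j with testBit bmp i = true and testBit bmp j = true, the Ctrie array positions satisfy pos(bmp, i) < pos(bmp, j), where pos(bmp, i) = popCount (bmp &&& (2^i − 1)); in particular, distinct set bits of the bitmap are assigned distinct array positions. -/
/-- The number of set bits (population count / bitcount) of a natural number. -/
def popCount (n : ℕ) : ℕ := n.bits.count true

/-- The Ctrie array position of the branch with flag `2^i` in a cnode with
bitmap `bmp`: the number of set bits of `bmp` strictly below position `i`. -/
def pos (bmp i : ℕ) : ℕ := popCount (bmp &&& (2 ^ i - 1))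

theorem popCount_eq_mod_two_add_popCount_div_two (n : ℕ) :
    popCount n = n % 2 + popCount (n / 2) := by
  induction n using Nat.binaryRec' with
  | zero => rfl
  | bit b m leading_one _ =>
    rw [Nat.bit_mod_two, Nat.bit_div_two, popCount, Nat.bits_append_bit m b leading_one,
      List.count_cons, popCount, add_comm]
    cases b <;> rfl

theorem popCount_mod_two_pow (n i : ℕ) :
    popCount (n % 2 ^ i) = Nat.count (fun k ↦ n.testBit k) i := by
  induction i generalizing n with
  | zero => rw [pow_zero, Nat.mod_one, Nat.count_zero, popCount, Nat.zero_bits, List.count_nil]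
  | succ i ih =>
    calc
      popCount (n % 2 ^ (i + 1)) = n % 2 + popCount (n / 2 % 2 ^ i) := by
        rw [popCount_eq_mod_two_add_popCount_div_two, pow_succ', Nat.mod_mul_right_mod,
          Nat.mod_mul_right_div_self]
      _ = (n.testBit 0).toNat + Nat.count (fun k ↦ n.testBit (k + 1)) i := by
        simp only [ih, Nat.testBit_succ, Nat.toNat_testBit, pow_zero, Nat.div_one]
      _ = Nat.count (fun k ↦ n.testBit k) (i + 1) := by
        rw [Nat.count_succ', add_comm, Bool.toNat, Bool.cond_eq_ite]

theorem pos_eq_count_testBit (bmp i : ℕ) : pos bmp i = Nat.count (fun k ↦ bmp.testBit k) i := by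
  rw [pos, Nat.and_two_pow_sub_one_eq_mod, popCount_mod_two_pow]

theorem pos_strictMono_on_set_bits_general (bmp i j : ℕ) (hij : i < j)
    (hi : bmp.testBit i = true) : pos bmp i < pos bmp j := by
  simpa only [pos_eq_count_testBit] using Nat.count_strict_mono hi hij

/-- Distinct set bits of the bitmap are assigned distinct (indeed, strictly
increasing) array positions. -/
theorem pos_strictMono_on_set_bits (bmp i j : ℕ) (hij : i < j)
    (hi : bmp.testBit i = true) (hj : bmp.testBit j = true) :
    pos bmp i < pos bmp j :=
  pos_strictMono_on_set_bits_general bmp i j hij hi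
end

section
/- For every bitmap bmp : ℕ, the map i ↦ pos(bmp, i) = popCount (bmp &&& (2^i − 1)) is a bijection from the set {i : ℕ | testBit bmp i = true} of set bits of bmp onto the set {m : ℕ | m < popCount bmp} of valid array positions; that is, each slot of a cnode array whose length equals popCount bmp corresponds to exactly one set bit of the bitmap. -/
/-! On the set bits of `bmp`, the counting function `pos bmp` is inverted by `Nat.nth`, which sends
`m` to the `m`-th set bit, counted from zero. -/

theorem bijOn_count_of_finite {p : ℕ → Prop} [DecidablePred p] (hp : {i | p i}.Finite) :
    Set.BijOn (Nat.count p) {i | p i} (Set.Iio hp.toFinset.card) := by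
  have inverse : Set.InvOn (Nat.nth p) (Nat.count p) {i | p i} (Set.Iio hp.toFinset.card) :=
    ⟨fun _ hi ↦ Nat.nth_count hi, fun _ hm ↦ Nat.count_nth_of_lt_card_finite hp hm⟩
  exact inverse.bijOn (fun _ hi ↦ Nat.count_lt_card hp hi)
    (fun _ hm ↦ Nat.nth_mem_of_lt_card hp hm)

theorem popCount_eq_length_bitIndices (n : ℕ) : popCount n = n.bitIndices.length := by
  rw [popCount]
  induction n using Nat.binaryRec' with
  | zero => simp
  | bit b n hn ih =>
    rw [Nat.bits_append_bit n b hn]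
    cases b <;> simp [ih]

theorem popCount_eq_card_bitIndices (n : ℕ) : popCount n = n.bitIndices.toFinset.card := by
  rw [List.toFinset_card_of_nodup Nat.bitIndices_nodup, popCount_eq_length_bitIndices]

theorem pos_eq_count (bmp i : ℕ) : pos bmp i = Nat.count (fun j ↦ bmp.testBit j = true) i := by
  have bits_below : (bmp &&& (2 ^ i - 1)).bitIndices.toFinset =
      {j ∈ Finset.range i | bmp.testBit j = true} := by
    ext j
    simp
  rw [pos, popCount_eq_card_bitIndices, bits_below, Nat.count_eq_card_filter_range]

theorem setOf_testBit_eq_coe_bitIndices (n : ℕ) :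
    {i | n.testBit i = true} = (n.bitIndices.toFinset : Set ℕ) := by
  ext i
  simp

theorem finite_setOf_testBit (n : ℕ) : {i | n.testBit i = true}.Finite := by
  rw [setOf_testBit_eq_coe_bitIndices]
  exact Finset.finite_toSet _

theorem card_toFinset_setOf_testBit (n : ℕ) :
    (finite_setOf_testBit n).toFinset.card = popCount n := by
  simp only [setOf_testBit_eq_coe_bitIndices, Finset.finite_toSet_toFinset,
    popCount_eq_card_bitIndices]

/-- The map `i ↦ pos(bmp, i)` is a bijection from the set of set bits of
`bmp` onto the set of valid array positions `{m | m < popCount bmp}`: each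
slot of a cnode array whose length equals `popCount bmp` corresponds to
exactly one set bit of the bitmap. -/
theorem pos_bijOn_set_bits (bmp : ℕ) :
    Set.BijOn (fun i => pos bmp i)
      {i : ℕ | bmp.testBit i = true}
      {m : ℕ | m < popCount bmp} := by
  have hcount := bijOn_count_of_finite (finite_setOf_testBit bmp)
  rw [card_toFinset_setOf_testBit] at hcount
  exact hcount.congr fun i _ ↦ (pos_eq_count bmp i).symm
end

section
/- Let bmp : ℕ be a bitmap and i : ℕ a bit index with testBit bmp i = false, and let bmp' = bmp ||| 2^i be the bitmap with the flag 2^i added. Then: (1) popCount bmp' = popCount bmp + 1; (2) pos(bmp', i) = pos(bmp, i); and (3) for every j with testBit bmp j = true, pos(bmp', j) = pos(bmp, j) if j < i and pos(bmp', j) = pos(bmp, j) + 1 if j > i. Hence inserting the new branch at position pos(bmp, i) and shifting later entries by one yields an array consistent with the updated bitmap, preserving invariants INV2 and INV3. -/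
/-!
Counting set bits is modular: `popCount (m ||| n) + popCount (m &&& n) = popCount m + popCount n`.
Masking with `2 ^ j - 1` is reduction modulo `2 ^ j`, which commutes with both bitwise operations,
so `pos · j` is modular too. An unset flag `2 ^ i` is disjoint from the bitmap, so adding it
contributes `popCount (2 ^ i) = 1` to the bitcount and `pos (2 ^ i) j` to the position at `j`;
the latter is `1` if `i < j` and `0` otherwise.
-/

theorem popCount_zero : popCount 0 = 0 := by
  simp [popCount]

theorem popCount_bit (b : Bool) (n : ℕ) : popCount (Nat.bit b n) = popCount n + b.toNat := by
  by_cases hn : n = 0 → b = true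
  · rw [popCount, Nat.bits_append_bit n b hn, List.count_cons]
    cases b <;> rfl
  · obtain ⟨rfl, hb⟩ : n = 0 ∧ b = false := by simpa using hn
    simp [hb, popCount_zero]

theorem popCount_two_pow (i : ℕ) : popCount (2 ^ i) = 1 := by
  induction i with
  | zero => simpa [popCount_zero] using popCount_bit true 0
  | succ i ih => simpa [pow_succ', ih] using popCount_bit false (2 ^ i)

theorem popCount_or_add_popCount_and (m n : ℕ) :
    popCount (m ||| n) + popCount (m &&& n) = popCount m + popCount n := by
  induction m using Nat.binaryRec generalizing n with
  | zero => simp only [Nat.zero_or, Nat.zero_and, add_comm]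
  | bit a m ih =>
    cases n using Nat.bitCasesOn with
    | bit b n =>
      have toNat_or_add_toNat_and : (a || b).toNat + (a && b).toNat = a.toNat + b.toNat := by
        cases a <;> cases b <;> rfl
      simp only [Nat.lor_bit, Nat.land_bit, popCount_bit]
      linarith [ih n]

theorem pos_eq_popCount_mod (n i : ℕ) : pos n i = popCount (n % 2 ^ i) := by
  rw [pos, Nat.and_two_pow_sub_one_eq_mod]

theorem pos_zero (i : ℕ) : pos 0 i = 0 := by
  rw [pos, Nat.zero_and, popCount_zero]

theorem pos_two_pow (i j : ℕ) : pos (2 ^ i) j = if i < j then 1 else 0 := by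
  rw [pos_eq_popCount_mod]
  split_ifs with hij
  · rw [Nat.mod_eq_of_lt (Nat.pow_lt_pow_right one_lt_two hij), popCount_two_pow]
  · rw [Nat.mod_eq_zero_of_dvd (pow_dvd_pow 2 (not_lt.mp hij)), popCount_zero]

theorem pos_or_add_pos_and (m n i : ℕ) :
    pos (m ||| n) i + pos (m &&& n) i = pos m i + pos n i := by
  simp only [pos_eq_popCount_mod, Nat.or_mod_two_pow, Nat.and_mod_two_pow,
    popCount_or_add_popCount_and]

theorem and_two_pow_eq_zero_of_testBit {n i : ℕ} (h : n.testBit i = false) : n &&& 2 ^ i = 0 := by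
  rw [Nat.and_two_pow, h, Bool.toNat_false, zero_mul]

theorem popCount_or_two_pow {n i : ℕ} (h : n.testBit i = false) :
    popCount (n ||| 2 ^ i) = popCount n + 1 := by
  simpa only [and_two_pow_eq_zero_of_testBit h, popCount_zero, popCount_two_pow, add_zero]
    using popCount_or_add_popCount_and n (2 ^ i)

theorem pos_or_two_pow {n i : ℕ} (h : n.testBit i = false) (j : ℕ) :
    pos (n ||| 2 ^ i) j = pos n j + if i < j then 1 else 0 := by
  simpa only [and_two_pow_eq_zero_of_testBit h, pos_zero, pos_two_pow, add_zero]
    using pos_or_add_pos_and n (2 ^ i) j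

theorem pos_insert_flag_general (bmp i : ℕ) (h : bmp.testBit i = false) :
    popCount (bmp ||| 2 ^ i) = popCount bmp + 1 ∧
    (∀ j ≤ i, pos (bmp ||| 2 ^ i) j = pos bmp j) ∧
    (∀ j > i, pos (bmp ||| 2 ^ i) j = pos bmp j + 1) := by
  refine ⟨popCount_or_two_pow h, fun j hj => ?_, fun j hj => ?_⟩
  · rw [pos_or_two_pow h, if_neg hj.not_gt, add_zero]
  · rw [pos_or_two_pow h, if_pos hj]

/-- Adding the flag `2^i` to a bitmap whose `i`-th bit is unset: the bitcount
grows by one, the position of the new flag is unchanged, and positions of the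
other set bits are unchanged below `i` and shifted up by one above `i`.
Hence inserting the new branch at position `pos(bmp, i)` and shifting later
entries by one yields an array consistent with the updated bitmap, preserving
invariants INV2 and INV3. -/
theorem pos_insert_flag (bmp i : ℕ) (h : bmp.testBit i = false) :
    popCount (bmp ||| 2 ^ i) = popCount bmp + 1 ∧
    pos (bmp ||| 2 ^ i) i = pos bmp i ∧
    (∀ j, bmp.testBit j = true →
      (j < i → pos (bmp ||| 2 ^ i) j = pos bmp j) ∧
      (j > i → pos (bmp ||| 2 ^ i) j = pos bmp j + 1)) := by
  obtain ⟨hcount, hle, hgt⟩ := pos_insert_flag_general bmp i h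
  exact ⟨hcount, hle i le_rfl, fun j _ => ⟨fun hj => hle j hj.le, hgt j⟩⟩
end

section
/- Let W ≥ 1 be the branching width, let h₁, h₂ : ℕ be two distinct hashcodes, and let l : ℕ be such that the hashcode chunks agree at every level index below l, i.e., (h₁ >>> (W·l')) % 2^W = (h₂ >>> (W·l')) % 2^W for all l' < l. Then 2^(W·l) ≤ h₁ ^^^ h₂ (bitwise XOR). In particular, the depth at which two distinct hashcodes first separate in the hash trie is at most log_{2^W} of their XOR, quantifying the O(log_{2^W} n) bound on the length of a search path. -/
/-- The hashcode chunk of a hashcode `h` at level index `l`, for branching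
width `W`: the block of `W` bits of `h` starting at bit position `W·l`. -/
def chunk (W l h : ℕ) : ℕ := (h >>> (W * l)) % 2 ^ W

/-! The chunks of a hashcode are its digits in base `2 ^ W`, so agreement below level `l` is
congruence modulo `2 ^ (W * l)`; reduction modulo a power of two commutes with XOR, so the XOR is
then a nonzero multiple of `2 ^ (W * l)`. -/

theorem mod_two_pow_mul_succ_eq_add_chunk (W l h : ℕ) :
    h % 2 ^ (W * (l + 1)) = h % 2 ^ (W * l) + 2 ^ (W * l) * chunk W l h := by
  rw [Nat.mul_succ, pow_add, Nat.mod_mul, chunk, Nat.shiftRight_eq_div_pow]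

theorem modEq_two_pow_mul_of_chunk_eq {W l h₁ h₂ : ℕ}
    (hagree : ∀ l' < l, chunk W l' h₁ = chunk W l' h₂) : h₁ ≡ h₂ [MOD 2 ^ (W * l)] := by
  induction l with
  | zero => simp [Nat.modEq_one]
  | succ l ih =>
    have hlow : h₁ % 2 ^ (W * l) = h₂ % 2 ^ (W * l) :=
      ih fun l' hl' => hagree l' (Nat.lt_succ_of_lt hl')
    rw [Nat.ModEq, mod_two_pow_mul_succ_eq_add_chunk, mod_two_pow_mul_succ_eq_add_chunk, hlow,
      hagree l (Nat.lt_succ_self l)]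

theorem two_pow_dvd_xor_iff_modEq {n a b : ℕ} : 2 ^ n ∣ a ^^^ b ↔ a ≡ b [MOD 2 ^ n] := by
  rw [Nat.dvd_iff_mod_eq_zero, Nat.xor_mod_two_pow, Nat.xor_eq_zero_iff, Nat.ModEq]

/-- If two distinct hashcodes have equal chunks at every level index below
`l`, then `2^(W·l) ≤ h₁ ^^^ h₂`. In particular, the depth at which two
distinct hashcodes first separate in the hash trie is at most the base-`2^W`
logarithm of their XOR, quantifying the `O(log_{2^W} n)` bound on the length
of a search path. -/
theorem xor_ge_of_chunks_agree_below (W : ℕ) (hW : 1 ≤ W) (h₁ h₂ : ℕ)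
    (hne : h₁ ≠ h₂) (l : ℕ)
    (hagree : ∀ l' < l, chunk W l' h₁ = chunk W l' h₂) :
    2 ^ (W * l) ≤ h₁ ^^^ h₂ := by
  have hdvd : 2 ^ (W * l) ∣ h₁ ^^^ h₂ :=
    two_pow_dvd_xor_iff_modEq.mpr (modEq_two_pow_mul_of_chunk_eq hagree)
  have hpos : 0 < h₁ ^^^ h₂ := Nat.pos_of_ne_zero (Nat.xor_ne_zero_iff.mpr hne)
  exact Nat.le_of_dvd hpos hdvd
end
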